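/- Let w ≥ 1 be an integer and let t_1,…,t_w ∈ (0,1/2]. Set s = 2^{w−1} · ∏_{b=1}^{w} t_b (so 0 < s ≤ 1/2). Then Σ_{b=1}^{w} (1 − t_b)/√(t_b) ≤ (1 − s)/√s + (w−1)/√2. -/

import Mathlib

open Finset

/-- Merging two coordinates `x, y ∈ (0, 1/2]` into `1/2` and `2xy` does not decrease the sum of
`(1 - t) / √t`. -/
lemma one_sub_div_sqrt_add_le {x y : ℝ} (hx : x ∈ Set.Ioc (0 : ℝ) (1 / 2))
    (hy : y ∈ Set.Ioc (0 : ℝ) (1 / 2)) :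
    (1 - x) / √x + (1 - y) / √y ≤ (1 - 2 * x * y) / √(2 * x * y) + 1 / √2 := by
  obtain ⟨hx0, hx1⟩ := hx
  obtain ⟨hy0, hy1⟩ := hy
  have hxa : √2 * √x ≤ 1 := by
    rw [← Real.sqrt_mul zero_le_two, Real.sqrt_le_one]
    linarith
  have hyb : √2 * √y ≤ 1 := by
    rw [← Real.sqrt_mul zero_le_two, Real.sqrt_le_one]
    linarith
  rw [Real.sqrt_mul (by positivity), Real.sqrt_mul zero_le_two]
  have ha := Real.sqrt_pos.2 hx0
  have hb := Real.sqrt_pos.2 hy0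
  have hr : 0 < √(2 : ℝ) := by positivity
  have hr2 := Real.sq_sqrt (zero_le_two (α := ℝ))
  have ha2 := Real.sq_sqrt hx0.le
  have hb2 := Real.sq_sqrt hy0.le
  have ha1 : √x ≤ 1 := Real.sqrt_le_one.2 (by linarith)
  have hb1 : √y ≤ 1 := Real.sqrt_le_one.2 (by linarith)
  generalize √x = a at *
  generalize √y = b at *
  generalize √(2 : ℝ) = r at *
  subst ha2 hb2
  have key : 0 ≤ (1 - r * a) * (1 - r * b) * (1 - a * b) / (r * a * b) :=
    div_nonneg (mul_nonneg (mul_nonneg (by linarith) (by linarith))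
      (by linarith [mul_le_one₀ ha1 hb.le hb1])) (by positivity)
  have diff : (1 - 2 * a ^ 2 * b ^ 2) / (r * a * b) + 1 / r -
      ((1 - a ^ 2) / a + (1 - b ^ 2) / b) =
      (1 - r * a) * (1 - r * b) * (1 - a * b) / (r * a * b) := by
    field_simp
    linear_combination (a ^ 2 * b ^ 2 - a * b) * hr2
  linarith

/-- For coordinates in `(0, 1/2]`, the rescaled product `2 ^ n * ∏ t` over `n + 1` coordinates
stays in `(0, 1/2]`. -/
lemma two_pow_mul_prod_mem_Ioc (n : ℕ) (t : Fin (n + 1) → ℝ)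
    (ht : ∀ b, t b ∈ Set.Ioc (0 : ℝ) (1 / 2)) :
    2 ^ n * ∏ b, t b ∈ Set.Ioc (0 : ℝ) (1 / 2) := by
  refine ⟨mul_pos (by positivity) (prod_pos fun b _ => (ht b).1), ?_⟩
  have h : ∏ b, t b ≤ (1 / 2 : ℝ) ^ (n + 1) := by
    simpa using prod_le_prod (fun b (_ : b ∈ univ) => (ht b).1.le) fun b _ => (ht b).2
  calc 2 ^ n * ∏ b, t b ≤ 2 ^ n * (1 / 2 : ℝ) ^ (n + 1) := by gcongr
    _ = 1 / 2 := by rw [pow_succ, ← mul_assoc, ← mul_pow]; norm_num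

/-- boundary extremality, via Karamata: for `t_1,…,t_w ∈ (0,1/2]` and
`s = 2^{w−1}·∏_b t_b`, one has `Σ_b (1−t_b)/√t_b ≤ (1−s)/√s + (w−1)/√2`. -/
theorem stmt10 (w : ℕ) (hw : 1 ≤ w) (t : Fin w → ℝ)
    (ht : ∀ b, t b ∈ Set.Ioc (0 : ℝ) (1 / 2)) :
    ∑ b, (1 - t b) / Real.sqrt (t b) ≤
      (1 - 2 ^ (w - 1) * ∏ b, t b) / Real.sqrt (2 ^ (w - 1) * ∏ b, t b) +
        ((w : ℝ) - 1) / Real.sqrt 2 := by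
  induction w, hw using Nat.le_induction with
  | base => simp
  | succ w hw ih =>
    obtain ⟨n, rfl⟩ := Nat.exists_eq_add_of_le' hw
    have hinit := ih (fun b => t b.castSucc) fun b => ht _
    have hmerge := one_sub_div_sqrt_add_le
      (two_pow_mul_prod_mem_Ioc n (fun b => t b.castSucc) fun b => ht _) (ht (Fin.last _))
    have hprod : 2 ^ (n + 1) * ((∏ b : Fin (n + 1), t b.castSucc) * t (Fin.last _)) =
        2 * (2 ^ n * ∏ b : Fin (n + 1), t b.castSucc) * t (Fin.last _) := by ring
    have hcount : ((n + 1 + 1 : ℕ) - 1 : ℝ) / √2 = ((n + 1 : ℕ) - 1 : ℝ) / √2 + 1 / √2 := by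
      push_cast
      ring
    rw [Fin.sum_univ_castSucc, Fin.prod_univ_castSucc, hcount]
    simp only [Nat.add_sub_cancel] at hinit ⊢
    rw [hprod]
    linarith
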